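/- Let m(k) = k₁/|k| for 0 ≠ k ∈ ℤ². There is a constant C such that for all functions φ̂, θ̂ : ℤ² → ℂ with θ̂(0) = 0 and finite right-hand side: ( ∑_{k ∈ ℤ²} | ∑_{k' ∈ ℤ², k' ≠ 0, k' ≠ k} |k|^{1/2} (m(k) − m(k')) φ̂(k − k') θ̂(k') |² )^{1/2} ≤ C ( ∑_{k ≠ 0} |k|⁶ |φ̂(k)|² )^{1/2} ( ∑_{k ≠ 0} |k|^{−1} |θ̂(k)|² )^{1/2} (with the convention m(0)−m(k') interpreted via m(0)=0 being irrelevant since |k|^{1/2} = 0 at k = 0). -/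

import Mathlib

open MeasureTheory Complex Filter
open scoped ENNReal NNReal

noncomputable section

abbrev Z2 := ℤ × ℤ

/-- dot product of an integer frequency with a point of `ℝ²` -/
def dotZ (k : Z2) (x : ℝ × ℝ) : ℝ := (k.1 : ℝ) * x.1 + (k.2 : ℝ) * x.2

/-- Euclidean norm of an integer frequency -/
def knorm (k : Z2) : ℝ := Real.sqrt ((k.1 : ℝ) ^ 2 + (k.2 : ℝ) ^ 2)

/-- Euclidean norm on `ℝ²` (realized as `ℝ × ℝ`) -/
def e2 (x : ℝ × ℝ) : ℝ := Real.sqrt (x.1 ^ 2 + x.2 ^ 2)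

/-- the fundamental domain `[-π, π]²` of the torus -/
def Q2 : Set (ℝ × ℝ) := Set.Icc (-Real.pi, -Real.pi) (Real.pi, Real.pi)

/-- `2π`-periodicity in both variables -/
def Periodic2 (f : ℝ × ℝ → ℂ) : Prop :=
  ∀ x : ℝ × ℝ, f (x.1 + 2 * Real.pi, x.2) = f x ∧ f (x.1, x.2 + 2 * Real.pi) = f x

def RealValued (f : ℝ × ℝ → ℂ) : Prop := ∀ x, (f x).im = 0

/-- Fourier coefficient `f̂(k) = (2π)⁻² ∫_{𝕋²} f(x) e^{-ik⋅x} dx` -/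
def fCoeff (f : ℝ × ℝ → ℂ) (k : Z2) : ℂ :=
  (1 / (2 * Real.pi) ^ 2 : ℂ) * ∫ x in Q2, f x * Complex.exp (-Complex.I * (dotZ k x : ℝ))

/-- Fourier multiplier operator with symbol `m` -/
def Tmult (m : Z2 → ℂ) (f : ℝ × ℝ → ℂ) : ℝ × ℝ → ℂ :=
  fun x => ∑' k : Z2, m k * fCoeff f k * Complex.exp (Complex.I * (dotZ k x : ℝ))

/-- `Λ^s = (-Δ)^{s/2}`, the multiplier with symbol `|k|^s` (killing `k = 0` for `s ≤ 0`) -/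
def Lam (s : ℝ) : (ℝ × ℝ → ℂ) → (ℝ × ℝ → ℂ) :=
  Tmult fun k => if k = 0 then 0 else ((knorm k ^ s : ℝ) : ℂ)

/-- symbol of the Riesz transform `R_j`, `i k_j / |k|` -/
def rieszSym (j : Fin 2) (k : Z2) : ℂ :=
  if k = 0 then 0
  else Complex.I * ((if j = 0 then (k.1 : ℝ) else (k.2 : ℝ)) : ℂ) / ((knorm k : ℝ) : ℂ)

/-- the Riesz transform `R_j` -/
def Riesz (j : Fin 2) : (ℝ × ℝ → ℂ) → (ℝ × ℝ → ℂ) := Tmult (rieszSym j)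

/-- symbol of the modified Riesz-type transforms `R_j^o` of Lemma 2.2 -/
def RoSym (j : Fin 2) (k : Z2) : ℝ :=
  if k = 0 then 0
  else if j = 0 then 25 * ((k.2 : ℝ) ^ 2 - (k.1 : ℝ) ^ 2) / (12 * ((k.1 : ℝ) ^ 2 + (k.2 : ℝ) ^ 2))
  else 7 * ((k.2 : ℝ) ^ 2 - (k.1 : ℝ) ^ 2) / (12 * ((k.1 : ℝ) ^ 2 + (k.2 : ℝ) ^ 2))
      + 4 * (k.1 : ℝ) * (k.2 : ℝ) / ((k.1 : ℝ) ^ 2 + (k.2 : ℝ) ^ 2)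

/-- the Riesz-type transforms `R_j^o` -/
def Ro (j : Fin 2) : (ℝ × ℝ → ℂ) → (ℝ × ℝ → ℂ) := Tmult fun k => ((RoSym j k : ℝ) : ℂ)

/-- symbol of `Δ⁻¹` (mean annihilated) -/
def deltaInvSym (k : Z2) : ℂ := if k = 0 then 0 else -1 / ((knorm k ^ 2 : ℝ) : ℂ)

/-- directional derivative `(v ⋅ ∇) f` -/
def dirD (v : ℝ × ℝ) (f : ℝ × ℝ → ℂ) : ℝ × ℝ → ℂ := fun x => fderiv ℝ f x v

/-- partial derivative `∂_j f` -/
def pd (j : Fin 2) (f : ℝ × ℝ → ℂ) : ℝ × ℝ → ℂ :=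
  dirD (if j = 0 then ((1 : ℝ), (0 : ℝ)) else ((0 : ℝ), (1 : ℝ))) f

/-- sup norm on the torus -/
def supNorm (f : ℝ × ℝ → ℂ) : ℝ := ⨆ x : ℝ × ℝ, ‖f x‖

/-- the `X`-norm `‖q‖_X = ‖q‖_∞ + ‖R₁^o q‖_∞ + ‖R₂^o q‖_∞` -/
def Xnorm (q : ℝ × ℝ → ℂ) : ℝ := supNorm q + supNorm (Ro 0 q) + supNorm (Ro 1 q)

/-- the vectors `l₁ = (3/5, 4/5)` and `l₂ = (1,0)` -/
def l1 : ℝ × ℝ := (3 / 5, 4 / 5)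
def l2 : ℝ × ℝ := (1, 0)

/-- the rotation `l ↦ l^⊥` -/
def perp (l : ℝ × ℝ) : ℝ × ℝ := (-l.2, l.1)

/-- symbol view of frequencies as real vectors -/
def toR (k : Z2) : ℝ × ℝ := ((k.1 : ℝ), (k.2 : ℝ))

/-- the operator `T^{(1)}_{λl}` (where `κ = λl ∈ ℤ²`) -/
def T1op (κ : Z2) (lam : ℝ) : (ℝ × ℝ → ℂ) → (ℝ × ℝ → ℂ) :=
  Tmult fun k => (((knorm (κ + k) + knorm (κ - k)) / 2 - lam : ℝ) : ℂ)

/-- the operator `T^{(2)}_{λl}` (where `κ = λl ∈ ℤ²`) -/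
def T2op (κ : Z2) (l : ℝ × ℝ) : (ℝ × ℝ → ℂ) → (ℝ × ℝ → ℂ) :=
  Tmult fun k =>
    Complex.I * (((knorm (κ + k) - knorm (κ - k)) / 2 - (l.1 * (k.1 : ℝ) + l.2 * (k.2 : ℝ)) : ℝ) : ℂ)

/-- the functions `a_j = 2 √(r/den) √(C₀ + R_j^o q / r)` -/
def aPerf (q : ℝ × ℝ → ℂ) (r den C₀ : ℝ) (j : Fin 2) : ℝ × ℝ → ℂ :=
  fun x => ((2 * Real.sqrt (r / den) * Real.sqrt (C₀ + (Ro j q x).re / r) : ℝ) : ℂ)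

/-- `λ_n = ⌈λ₀^{bⁿ}⌉` -/
def lamSeq (lam0 : ℕ) (b : ℝ) (n : ℕ) : ℕ := ⌈((lam0 : ℝ)) ^ (b ^ n)⌉₊

/-- `r_n = λ_n^{-β}` -/
def rSeq (lam0 : ℕ) (b β : ℝ) (n : ℕ) : ℝ := ((lamSeq lam0 b n : ℝ)) ^ (-β)

/-- `μ_{n+1} = (λ_n λ_{n+1})^{1/2}` -/
def muSeq (lam0 : ℕ) (b : ℝ) (n : ℕ) : ℝ :=
  Real.sqrt ((lamSeq lam0 b n : ℝ) * (lamSeq lam0 b (n + 1) : ℝ))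

/-- smooth Fourier cutoff `P_{≤μ}` associated to a bump `ψ` -/
def Pcut (ψ : ℝ × ℝ → ℝ) (μ : ℝ) : (ℝ × ℝ → ℂ) → (ℝ × ℝ → ℂ) :=
  Tmult fun k => ((ψ ((k.1 : ℝ) / μ, (k.2 : ℝ) / μ) : ℝ) : ℂ)

/-- bilinear multiplier with symbol the Fourier transform of a kernel `K ∈ L¹(ℝ²×ℝ²)` -/
def mOf (K : (ℝ × ℝ) × (ℝ × ℝ) → ℂ) (ξ η : ℝ × ℝ) : ℂ :=
  ∫ z : (ℝ × ℝ) × (ℝ × ℝ),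
    K z * Complex.exp (-Complex.I * ((ξ.1 * z.1.1 + ξ.2 * z.1.2 + η.1 * z.2.1 + η.2 * z.2.2 : ℝ) : ℂ))

/-- the bilinear multiplier operator associated to a kernel `K ∈ L¹(ℝ²×ℝ²)` -/
def Tbil (K : (ℝ × ℝ) × (ℝ × ℝ) → ℂ) (f g : ℝ × ℝ → ℂ) : ℝ × ℝ → ℂ :=
  fun x => ∑' k : Z2,
    (∑' k' : Z2, mOf K (toR k') (toR (k - k')) * fCoeff f k' * fCoeff g (k - k'))
      * Complex.exp (Complex.I * (dotZ k x : ℝ))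

/-- Fourier coefficients of the commutator `[R_j, φ]θ`, computed from those of `φ` and `θ` -/
def commCoeff (j : Fin 2) (φh c : Z2 → ℂ) (k : Z2) : ℂ :=
  ∑' k' : Z2, (rieszSym j k - rieszSym j k') * φh (k - k') * c k'

/-!
The zero-homogeneous symbol `m` is Lipschitz on the unit sphere, so
`|k| |m(k) - m(k')| ≤ 2 |k - k'|`, and also with `|k'|` in place of `|k|` on the left. The geometric
mean of the two bounds is `|k|^{1/2} |m(k) - m(k')| ≤ 2 |k - k'| |k'|^{-1/2}`, which dominates the
sum over `k'` by the convolution of `|k| |φ̂|` with `|k|^{-1/2} |θ̂|`. Young's inequality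
`ℓ¹ * ℓ² ⊆ ℓ²` applies, since `|k| |φ̂| = |k|^{-2} · |k|³ |φ̂|` is a product of two `ℓ²` sequences.
-/

section Convolution

variable {ι : Type*} {f g w : ι → ℝ}

lemma summable_and_abs_tsum_mul_le_sqrt_mul_sqrt
    (hf : Summable fun i ↦ f i ^ 2) (hg : Summable fun i ↦ g i ^ 2) :
    (Summable fun i ↦ f i * g i) ∧
      |∑' i, f i * g i| ≤ √(∑' i, f i ^ 2) * √(∑' i, g i ^ 2) := by
  have habs := Real.summable_and_inner_le_Lp_mul_Lq_tsum_of_nonneg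
    Real.HolderConjugate.two_two (fun i ↦ abs_nonneg (f i)) (fun i ↦ abs_nonneg (g i))
    (by simpa only [Real.rpow_two, sq_abs] using hf)
    (by simpa only [Real.rpow_two, sq_abs] using hg)
  simp only [Real.rpow_two, sq_abs, ← Real.sqrt_eq_rpow, ← abs_mul, summable_abs_iff] at habs
  exact ⟨habs.1, (norm_tsum_le_tsum_norm habs.1.norm).trans habs.2⟩

lemma summable_and_sq_tsum_mul_le (hw₀ : ∀ i, 0 ≤ w i)
    (hw : Summable w) (hwf : Summable fun i ↦ w i * f i ^ 2) :
    (Summable fun i ↦ w i * f i) ∧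
      (∑' i, w i * f i) ^ 2 ≤ (∑' i, w i) * ∑' i, w i * f i ^ 2 := by
  have sq_sqrt_mul (i) : (√(w i) * f i) ^ 2 = w i * f i ^ 2 := by
    rw [mul_pow, Real.sq_sqrt (hw₀ i)]
  have sqrt_mul_sqrt_mul (i) : √(w i) * (√(w i) * f i) = w i * f i := by
    rw [← mul_assoc, Real.mul_self_sqrt (hw₀ i)]
  obtain ⟨hsum, hle⟩ := summable_and_abs_tsum_mul_le_sqrt_mul_sqrt (f := fun i ↦ √(w i))
    (g := fun i ↦ √(w i) * f i) (by simpa only [Real.sq_sqrt (hw₀ _)] using hw)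
    (by simpa only [sq_sqrt_mul] using hwf)
  simp only [sqrt_mul_sqrt_mul, sq_sqrt_mul, Real.sq_sqrt (hw₀ _)] at hsum hle
  refine ⟨hsum, ?_⟩
  calc (∑' i, w i * f i) ^ 2
      ≤ (√(∑' i, w i) * √(∑' i, w i * f i ^ 2)) ^ 2 := sq_le_sq.2 (hle.trans (le_abs_self _))
    _ = (∑' i, w i) * ∑' i, w i * f i ^ 2 := by
        rw [mul_pow, Real.sq_sqrt (tsum_nonneg hw₀),
          Real.sq_sqrt (tsum_nonneg fun i ↦ mul_nonneg (hw₀ i) (sq_nonneg _))]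

lemma summable_and_abs_tsum_mul_le_sqrt_inv_pow_mul_sqrt {n : ℕ}
    (hw : Summable fun i ↦ (w i ^ (2 * n))⁻¹)
    (hf : Summable fun i ↦ w i ^ (2 * (n + 1)) * f i ^ 2) :
    (Summable fun i ↦ w i * f i) ∧
      |∑' i, w i * f i| ≤
        √(∑' i, (w i ^ (2 * n))⁻¹) * √(∑' i, w i ^ (2 * (n + 1)) * f i ^ 2) := by
  have sq_inv_pow (i) : ((w i ^ n)⁻¹) ^ 2 = (w i ^ (2 * n))⁻¹ := by rw [inv_pow, ← pow_mul']
  have sq_pow_mul (i) : (w i ^ (n + 1) * f i) ^ 2 = w i ^ (2 * (n + 1)) * f i ^ 2 := by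
    rw [mul_pow, ← pow_mul']
  have inv_pow_mul_pow_mul (i) : (w i ^ n)⁻¹ * (w i ^ (n + 1) * f i) = w i * f i := by
    rcases eq_or_ne (w i) 0 with h | h
    · simp [h]
    · rw [pow_succ, mul_assoc, inv_mul_cancel_left₀ (pow_ne_zero n h)]
  simpa only [sq_inv_pow, sq_pow_mul, inv_pow_mul_pow_mul] using
    summable_and_abs_tsum_mul_le_sqrt_mul_sqrt (f := fun i ↦ (w i ^ n)⁻¹)
      (g := fun i ↦ w i ^ (n + 1) * f i) (by simpa only [sq_inv_pow] using hw)
      (by simpa only [sq_pow_mul] using hf)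

variable {G : Type*} [AddGroup G] {a b c : G → ℝ}

lemma hasSum_sub_mul (ha : Summable a) (hc : Summable c) :
    HasSum (fun p : G × G ↦ a (p.1 - p.2) * c p.2) ((∑' k, a k) * ∑' k, c k) := by
  have hprod : Summable fun p : G × G ↦ a p.1 * c p.2 :=
    summable_mul_of_summable_norm ha.norm hc.norm
  let shear : G × G ≃ G × G :=
    { toFun := fun p ↦ (p.1 - p.2, p.2)
      invFun := fun p ↦ (p.1 + p.2, p.2)
      left_inv := fun p ↦ by simp
      right_inv := fun p ↦ by simp }
  rw [ha.tsum_mul_tsum hc hprod]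
  exact shear.hasSum_iff.2 hprod.hasSum

lemma summable_and_sqrt_tsum_sq_convolution_le (ha₀ : ∀ k, 0 ≤ a k)
    (ha : Summable a) (hb : Summable fun k ↦ b k ^ 2) :
    (∀ k, Summable fun k' ↦ a (k - k') * b k') ∧
      (Summable fun k ↦ (∑' k', a (k - k') * b k') ^ 2) ∧
      √(∑' k, (∑' k', a (k - k') * b k') ^ 2) ≤ (∑' k, a k) * √(∑' k, b k ^ 2) := by
  have hprod := hasSum_sub_mul ha hb
  have hrow (k : G) : (Summable fun k' ↦ a (k - k') * b k') ∧
      (∑' k', a (k - k') * b k') ^ 2 ≤ (∑' j, a j) * ∑' k', a (k - k') * b k' ^ 2 := by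
    have hreflect : ∑' k', a (k - k') = ∑' j, a j := (Equiv.subLeft k).tsum_eq a
    rw [← hreflect]
    exact summable_and_sq_tsum_mul_le (fun k' ↦ ha₀ _)
      ((Equiv.subLeft k).summable_iff.2 ha) (hprod.summable.prod_factor k)
  have hbound : Summable fun k ↦ (∑' j, a j) * ∑' k', a (k - k') * b k' ^ 2 :=
    hprod.summable.prod.mul_left _
  have hsq : Summable fun k ↦ (∑' k', a (k - k') * b k') ^ 2 :=
    .of_nonneg_of_le (fun k ↦ sq_nonneg _) (fun k ↦ (hrow k).2) hbound
  refine ⟨fun k ↦ (hrow k).1, hsq, ?_⟩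
  calc √(∑' k, (∑' k', a (k - k') * b k') ^ 2)
      ≤ √(∑' k, (∑' j, a j) * ∑' k', a (k - k') * b k' ^ 2) :=
        Real.sqrt_le_sqrt (hsq.tsum_le_tsum (fun k ↦ (hrow k).2) hbound)
    _ = √((∑' j, a j) ^ 2 * ∑' k, b k ^ 2) := by
        rw [tsum_mul_left, ← hprod.summable.tsum_prod, hprod.tsum_eq, ← mul_assoc, sq]
    _ = (∑' k, a k) * √(∑' k, b k ^ 2) := by
        rw [Real.sqrt_mul (sq_nonneg _), Real.sqrt_sq (tsum_nonneg ha₀)]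

lemma summable_and_sqrt_tsum_sq_norm_tsum_le {F : Type*} [SeminormedAddCommGroup F]
    {K : G → G → F} (ha₀ : ∀ k, 0 ≤ a k)
    (ha : Summable a) (hb : Summable fun k ↦ b k ^ 2)
    (hK : ∀ k k', ‖K k k'‖ ≤ a (k - k') * b k') :
    (Summable fun k ↦ ‖∑' k', K k k'‖ ^ 2) ∧
      √(∑' k, ‖∑' k', K k k'‖ ^ 2) ≤ (∑' k, a k) * √(∑' k, b k ^ 2) := by
  obtain ⟨hrow, hsq, hle⟩ := summable_and_sqrt_tsum_sq_convolution_le ha₀ ha hb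
  have hdom (k : G) : ‖∑' k', K k k'‖ ^ 2 ≤ (∑' k', a (k - k') * b k') ^ 2 :=
    pow_le_pow_left₀ (norm_nonneg _) (tsum_of_norm_bounded (hrow k).hasSum (hK k)) 2
  have hsum : Summable fun k ↦ ‖∑' k', K k k'‖ ^ 2 :=
    .of_nonneg_of_le (fun k ↦ sq_nonneg _) hdom hsq
  exact ⟨hsum, (Real.sqrt_le_sqrt (hsum.tsum_le_tsum hdom hsq)).trans hle⟩

end Convolution

section Symbol

variable {E : Type*} [NormedAddCommGroup E] [NormedSpace ℝ E]

open NormedSpace (normalize)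

lemma norm_mul_norm_normalize_sub_le (x y : E) :
    ‖x‖ * ‖normalize x - normalize y‖ ≤ 2 * ‖x - y‖ := by
  have hsplit : ‖x‖ • (normalize x - normalize y) = (x - y) + (‖y‖ - ‖x‖) • normalize y := by
    rw [smul_sub, sub_smul, NormedSpace.norm_smul_normalize, NormedSpace.norm_smul_normalize]
    abel
  have hunit : ‖normalize y‖ ≤ 1 := by
    rcases eq_or_ne y 0 with rfl | hy
    · simp
    · exact (NormedSpace.norm_normalize hy).le
  calc ‖x‖ * ‖normalize x - normalize y‖ = ‖(x - y) + (‖y‖ - ‖x‖) • normalize y‖ := by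
        rw [← hsplit, norm_smul, norm_norm]
    _ ≤ ‖x - y‖ + |‖y‖ - ‖x‖| * ‖normalize y‖ := by
        grw [norm_add_le, norm_smul, Real.norm_eq_abs]
    _ ≤ ‖x - y‖ + ‖x - y‖ * 1 := by
        gcongr
        exact norm_sub_rev x y ▸ abs_norm_sub_norm_le y x
    _ = 2 * ‖x - y‖ := by ring

lemma sqrt_norm_mul_sqrt_norm_mul_norm_normalize_sub_le (x y : E) :
    √‖x‖ * √‖y‖ * ‖normalize x - normalize y‖ ≤ 2 * ‖x - y‖ := by
  have hx := norm_mul_norm_normalize_sub_le x y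
  have hy := norm_mul_norm_normalize_sub_le y x
  rw [norm_sub_rev (normalize y), norm_sub_rev y] at hy
  refine le_of_sq_le_sq ?_ (by positivity)
  calc (√‖x‖ * √‖y‖ * ‖normalize x - normalize y‖) ^ 2
      = (‖x‖ * ‖normalize x - normalize y‖) * (‖y‖ * ‖normalize x - normalize y‖) := by
        rw [mul_pow, mul_pow, Real.sq_sqrt (norm_nonneg x), Real.sq_sqrt (norm_nonneg y)]
        ring
    _ ≤ (2 * ‖x - y‖) * (2 * ‖x - y‖) := by gcongr
    _ = (2 * ‖x - y‖) ^ 2 := (sq _).symm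

lemma sqrt_norm_mul_abs_apply_div_norm_sub_le (ℓ : E →L[ℝ] ℝ) (x : E) {y : E} (hy : y ≠ 0) :
    √‖x‖ * |ℓ x / ‖x‖ - ℓ y / ‖y‖| ≤ 2 * ‖ℓ‖ * (‖x - y‖ * √‖y‖⁻¹) := by
  have hℓ : |ℓ x / ‖x‖ - ℓ y / ‖y‖| ≤ ‖ℓ‖ * ‖normalize x - normalize y‖ := by
    have hop := ℓ.le_opNorm (normalize x - normalize y)
    simpa only [NormedSpace.normalize, map_sub, map_smul, smul_eq_mul, inv_mul_eq_div,
      Real.norm_eq_abs] using hop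
  have hy' : √‖y‖ ≠ 0 := Real.sqrt_ne_zero'.2 (norm_pos_iff.2 hy)
  calc √‖x‖ * |ℓ x / ‖x‖ - ℓ y / ‖y‖|
      ≤ √‖x‖ * (‖ℓ‖ * ‖normalize x - normalize y‖) := by gcongr
    _ = ‖ℓ‖ * (√‖x‖ * √‖y‖ * ‖normalize x - normalize y‖) * (√‖y‖)⁻¹ := by
        field_simp [hy']
    _ ≤ ‖ℓ‖ * (2 * ‖x - y‖) * (√‖y‖)⁻¹ := by
        gcongr ‖ℓ‖ * ?_ * _
        exact sqrt_norm_mul_sqrt_norm_mul_norm_normalize_sub_le x y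
    _ = 2 * ‖ℓ‖ * (‖x - y‖ * √‖y‖⁻¹) := by rw [Real.sqrt_inv]; ring

end Symbol

theorem stmt17_general {G E : Type*} [AddCommGroup G] [NormedAddCommGroup E] [NormedSpace ℝ E]
    {u : G →+ E} (hu : Function.Injective u) {n : ℕ}
    (hsum : Summable fun k ↦ (‖u k‖ ^ (2 * n))⁻¹) (ℓ : E →L[ℝ] ℝ) {φ θ : G → ℂ} (hθ₀ : θ 0 = 0)
    (hφ : Summable fun k ↦ ‖u k‖ ^ (2 * (n + 1)) * ‖φ k‖ ^ 2)
    (hθ : Summable fun k ↦ ‖u k‖⁻¹ * ‖θ k‖ ^ 2) :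
    (Summable fun k ↦ ‖∑' k', ((√‖u k‖ : ℝ) : ℂ) *
        ((ℓ (u k) / ‖u k‖ - ℓ (u k') / ‖u k'‖ : ℝ) : ℂ) * φ (k - k') * θ k'‖ ^ 2) ∧
      √(∑' k, ‖∑' k', ((√‖u k‖ : ℝ) : ℂ) *
        ((ℓ (u k) / ‖u k‖ - ℓ (u k') / ‖u k'‖ : ℝ) : ℂ) * φ (k - k') * θ k'‖ ^ 2) ≤
      2 * ‖ℓ‖ * √(∑' k, (‖u k‖ ^ (2 * n))⁻¹) *
        √(∑' k, ‖u k‖ ^ (2 * (n + 1)) * ‖φ k‖ ^ 2) * √(∑' k, ‖u k‖⁻¹ * ‖θ k‖ ^ 2) := by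
  obtain ⟨hφ₁, hφ_le⟩ := summable_and_abs_tsum_mul_le_sqrt_inv_pow_mul_sqrt hsum hφ
  have sq_weight (k) : (√‖u k‖⁻¹ * ‖θ k‖) ^ 2 = ‖u k‖⁻¹ * ‖θ k‖ ^ 2 := by
    rw [mul_pow, Real.sq_sqrt (inv_nonneg.2 (norm_nonneg _))]
  have hkernel (k k' : G) :
      ‖((√‖u k‖ : ℝ) : ℂ) * ((ℓ (u k) / ‖u k‖ - ℓ (u k') / ‖u k'‖ : ℝ) : ℂ) * φ (k - k') * θ k'‖ ≤
        2 * ‖ℓ‖ * (‖u (k - k')‖ * ‖φ (k - k')‖) * (√‖u k'‖⁻¹ * ‖θ k'‖) := by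
    rcases eq_or_ne k' 0 with rfl | hk'
    · simp [hθ₀]
    · have hsymbol := sqrt_norm_mul_abs_apply_div_norm_sub_le ℓ (u k)
        ((map_ne_zero_iff u hu).2 hk')
      rw [norm_mul, norm_mul, norm_mul, Complex.norm_real, Complex.norm_real, Real.norm_eq_abs,
        Real.norm_eq_abs, abs_of_nonneg (Real.sqrt_nonneg _), map_sub]
      grw [hsymbol]
      exact le_of_eq (by ring)
  obtain ⟨hsq, hle⟩ := summable_and_sqrt_tsum_sq_norm_tsum_le (fun k ↦ by positivity)
    (hφ₁.mul_left (2 * ‖ℓ‖)) (by simpa only [sq_weight] using hθ) hkernel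
  refine ⟨hsq, hle.trans ?_⟩
  simp only [sq_weight]
  grw [tsum_mul_left, le_of_abs_le hφ_le]
  exact le_of_eq (by ring)

section Lattice

/-- The embedding of the frequency lattice `ℤ²` in the plane, realized as `ℂ` so that `k₁` is the
real part. -/
def frequencyHom : Z2 →+ ℂ where
  toFun k := ⟨k.1, k.2⟩
  map_zero' := by simp [Complex.ext_iff]
  map_add' k l := by simp [Complex.ext_iff]

lemma frequencyHom_re (k : Z2) : (frequencyHom k).re = k.1 := rfl

lemma frequencyHom_injective : Function.Injective frequencyHom := fun _ _ h ↦
  Prod.ext (Int.cast_injective (congrArg re h)) (Int.cast_injective (congrArg im h))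

lemma norm_frequencyHom (k : Z2) : ‖frequencyHom k‖ = knorm k :=
  Complex.norm_eq_sqrt_sq_add_sq _

lemma frequencyHom_mem_span_basisOneI (k : Z2) :
    frequencyHom k ∈ Submodule.span ℤ (Set.range Complex.basisOneI) := by
  have hk : frequencyHom k = k.1 • Complex.basisOneI 0 + k.2 • Complex.basisOneI 1 := by
    simp [Complex.ext_iff, frequencyHom]
  rw [hk]
  exact add_mem (Submodule.smul_mem _ _ (Submodule.subset_span (Set.mem_range_self 0)))
    (Submodule.smul_mem _ _ (Submodule.subset_span (Set.mem_range_self 1)))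

lemma summable_inv_norm_frequencyHom_pow {n : ℕ} (hn : 2 < n) :
    Summable fun k : Z2 ↦ (‖frequencyHom k‖ ^ n)⁻¹ := by
  have hrank : Module.finrank ℤ (Submodule.span ℤ (Set.range Complex.basisOneI)) < n := by
    rwa [ZLattice.rank ℝ, Complex.finrank_real_complex]
  have hinj : Function.Injective fun k ↦ (⟨frequencyHom k, frequencyHom_mem_span_basisOneI k⟩ :
      Submodule.span ℤ (Set.range Complex.basisOneI)) :=
    fun _ _ h ↦ frequencyHom_injective (congrArg Subtype.val h)
  simpa only [inv_pow, Function.comp_def, Submodule.coe_norm] using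
    (ZLattice.summable_norm_pow_inv _ n hrank).comp_injective hinj

end Lattice

/-- estimate \eqref{te_456}: with `m(k) = k₁/|k|`,
`‖∑_{k'≠0,k} |k|^{1/2}(m(k)−m(k')) φ̂(k−k') θ̂(k')‖_{ℓ²_k}
   ≤ C ‖|k|³ φ̂‖_{ℓ²} ‖|k|^{-1/2} θ̂‖_{ℓ²}`. -/
theorem stmt17 : ∃ C : ℝ, ∀ φh θh : Z2 → ℂ, θh 0 = 0 →
    Summable (fun k : Z2 => knorm k ^ (6 : ℕ) * ‖φh k‖ ^ 2) →
    Summable (fun k : Z2 => (knorm k)⁻¹ * ‖θh k‖ ^ 2) →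
    Summable (fun k : Z2 =>
      ‖∑' k' : Z2, if k' ≠ 0 ∧ k' ≠ k then
          ((Real.sqrt (knorm k) : ℝ) : ℂ)
            * ((((k.1 : ℝ) / knorm k - (k'.1 : ℝ) / knorm k' : ℝ)) : ℂ)
            * φh (k - k') * θh k'
        else 0‖ ^ 2) ∧
    Real.sqrt (∑' k : Z2,
      ‖∑' k' : Z2, if k' ≠ 0 ∧ k' ≠ k then
          ((Real.sqrt (knorm k) : ℝ) : ℂ)
            * ((((k.1 : ℝ) / knorm k - (k'.1 : ℝ) / knorm k' : ℝ)) : ℂ)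
            * φh (k - k') * θh k'
        else 0‖ ^ 2)
      ≤ C * Real.sqrt (∑' k : Z2, knorm k ^ (6 : ℕ) * ‖φh k‖ ^ 2)
          * Real.sqrt (∑' k : Z2, (knorm k)⁻¹ * ‖θh k‖ ^ 2) := by
  refine ⟨2 * √(∑' k, (knorm k ^ 4)⁻¹), fun φh θh hθ₀ ↦ ?_⟩
  have hterm (k k' : Z2) :
      (if k' ≠ 0 ∧ k' ≠ k then
        ((√(knorm k) : ℝ) : ℂ) * ((k.1 / knorm k - k'.1 / knorm k' : ℝ) : ℂ) *
          φh (k - k') * θh k' else 0) =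
      ((√(knorm k) : ℝ) : ℂ) * ((k.1 / knorm k - k'.1 / knorm k' : ℝ) : ℂ) *
        φh (k - k') * θh k' := by
    refine ite_eq_left_iff.2 fun h ↦ ?_
    rcases not_and_or.1 h with hk' | hk'
    · simp [not_not.1 hk', hθ₀]
    · simp [not_not.1 hk']
  simpa only [hterm, norm_frequencyHom, reCLM_apply, frequencyHom_re, reCLM_norm, mul_one,
    Nat.reduceAdd, Nat.reduceMul] using stmt17_general (φ := φh) frequencyHom_injective (n := 2)
      (summable_inv_norm_frequencyHom_pow (by norm_num)) reCLM hθ₀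

end
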